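/- arXiv:1809.05591 — 2 statements merged into one kernel-verified Lean document; each statement's English description precedes it below -/
import Mathlib

section
/- Let N ≥ 1, let B_R ⊂ ℝ^N be an open ball of radius R with 0 < R ≤ 1, let α be a real number with |α| ≥ 1, and let g be a nonnegative measurable function on B_R, strictly positive almost everywhere if α < 0, such that g^α is essentially bounded on B_R. Let k > 1 and C > 0 and assume that for every q > 0, (∫_{B_R} g^{αqk} dx)^{1/k} ≤ C · ∫_{B_R} g^{αq} dx. Then for every p > 0 and every integer ν ≥ 0, (∫_{B_R} g^{αpk^{ν+1}} dx)^{1/(pk^{ν+1})} ≤ (C/R)^{(1/p)·Σ_{i=0}^{ν} k^{−i}} · (∫_{B_R} g^{αp} dx)^{1/p}. -/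
/-!
Write `I q = ∫_{B_R} g^(αq)`. Since `R ≤ 1`, the reverse Hölder hypothesis holds with `C / R` in place
of `C`. Applying it at `q = p k^n` and raising to the power `1/(p k^n)` gives
`I(p k^(n+1))^(1/(p k^(n+1))) ≤ (C/R)^(k^(-n)/p) · I(p k^n)^(1/(p k^n))`, and the exponents of `C/R`
accumulate to a geometric sum by induction. Only `I ≥ 0` is needed about `I`, so the iteration is
carried out in `moser_iterate` for an arbitrary nonnegative function of `q`.
-/

open MeasureTheory

/-- Iteration of `I (q k) ^ (1/k) ≤ D * I q` along `q = p, p k, p k², …`. -/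
lemma moser_iterate (I : ℝ → ℝ) (hI : ∀ q, 0 ≤ I q) (k D : ℝ) (hk : 0 < k) (hD : 0 < D)
    (h : ∀ q > (0:ℝ), I (q * k) ^ (1/k) ≤ D * I q) (p : ℝ) (hp : 0 < p) (n : ℕ) :
    I (p * k ^ n) ^ (1/(p * k ^ n)) ≤
      D ^ ((1/p) * ∑ i ∈ Finset.range n, k ^ (-(i:ℝ))) * I p ^ (1/p) := by
  induction n with
  | zero => simp
  | succ n ih =>
    have hq : 0 < p * k ^ n := by positivity
    have hexp : 1/(p * k ^ (n+1)) = (1/k) * (1/(p * k ^ n)) := by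
      field_simp
      ring
    have hgeom : 1/(p * k ^ n) = (1/p) * k ^ (-(n:ℝ)) := by
      rw [Real.rpow_neg hk.le, Real.rpow_natCast]
      field_simp
    calc I (p * k ^ (n+1)) ^ (1/(p * k ^ (n+1)))
        = (I (p * k ^ n * k) ^ (1/k)) ^ (1/(p * k ^ n)) := by
          rw [hexp, Real.rpow_mul (hI _), pow_succ, mul_assoc]
      _ ≤ (D * I (p * k ^ n)) ^ (1/(p * k ^ n)) :=
          Real.rpow_le_rpow (Real.rpow_nonneg (hI _) _) (h _ hq) (by positivity)
      _ = D ^ ((1/p) * k ^ (-(n:ℝ))) * I (p * k ^ n) ^ (1/(p * k ^ n)) := by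
          rw [Real.mul_rpow hD.le (hI _), ← hgeom]
      _ ≤ D ^ ((1/p) * k ^ (-(n:ℝ))) *
            (D ^ ((1/p) * ∑ i ∈ Finset.range n, k ^ (-(i:ℝ))) * I p ^ (1/p)) := by
          gcongr
      _ = _ := by
          rw [← mul_assoc, ← Real.rpow_add hD, Finset.sum_range_succ, mul_add, add_comm]

/-- The finite iteration estimate (eq2.Adx2) in the proof of the Moser-type iteration lemma:
`(∫_{B_R} g^{αpk^{ν+1}})^{1/(pk^{ν+1})} ≤ (C/R)^{(1/p)·Σ_{i=0}^{ν} k^{−i}} · (∫_{B_R} g^{αp})^{1/p}`. -/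
theorem moser_finite_iteration
    (N : ℕ) (hN : 1 ≤ N)
    (y : EuclideanSpace ℝ (Fin N)) (R : ℝ) (hR0 : 0 < R) (hR1 : R ≤ 1)
    (α : ℝ) (hα : 1 ≤ |α|)
    (g : EuclideanSpace ℝ (Fin N) → ℝ) (hgmeas : Measurable g)
    (hgnonneg : ∀ x ∈ Metric.ball y R, 0 ≤ g x)
    (hgpos : α < 0 → ∀ᵐ x ∂(volume.restrict (Metric.ball y R)), 0 < g x)
    (hgbdd : ∃ K : ℝ, ∀ᵐ x ∂(volume.restrict (Metric.ball y R)), g x ^ α ≤ K)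
    (k C : ℝ) (hk : 1 < k) (hC : 0 < C)
    (hrev : ∀ q > (0:ℝ),
      (∫ x in Metric.ball y R, g x ^ (α * q * k)) ^ (1/k) ≤
        C * ∫ x in Metric.ball y R, g x ^ (α * q)) :
    ∀ p > (0:ℝ), ∀ ν : ℕ,
      (∫ x in Metric.ball y R, g x ^ (α * (p * k ^ (ν + 1)))) ^ (1/(p * k ^ (ν + 1))) ≤
        (C / R) ^ ((1/p) * ∑ i ∈ Finset.range (ν + 1), k ^ (-(i:ℝ))) *
          (∫ x in Metric.ball y R, g x ^ (α * p)) ^ (1/p) := by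
  intro p hp ν
  have hI : ∀ q : ℝ, 0 ≤ ∫ x in Metric.ball y R, g x ^ (α * q) := fun q =>
    setIntegral_nonneg measurableSet_ball fun x hx => Real.rpow_nonneg (hgnonneg x hx) _
  refine moser_iterate (fun q => ∫ x in Metric.ball y R, g x ^ (α * q)) hI k (C / R)
    (by linarith) (by positivity) (fun q hq => ?_) p hp (ν + 1)
  have hCR : C ≤ C / R := le_div_self hC.le hR0 hR1
  simp only [← mul_assoc]
  exact (hrev q hq).trans (mul_le_mul_of_nonneg_right hCR (hI q))
end

section
/- Let B' ⊆ B be nonempty sets, let u : B → ℝ be bounded, let r > 0 and C ≥ 1. Define v = u − inf_B u and w = sup_B u − u on B. Assume that sup_{B'} v ≤ C·(inf_{B'} v + r) and sup_{B'} w ≤ C·(inf_{B'} w + r). Then sup_{B'} u − inf_{B'} u ≤ ((C−1)/C)·(sup_B u − inf_B u) + 2r. -/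
/-!
Write `M, m` for the supremum and infimum of `u` over `B`, and `M', m'` for those over `B'`.
The Harnack inequalities read `M' - m ≤ C (m' - m + r)` and `M - m' ≤ C (M - M' + r)`. Adding them
gives `(M' - m') + (M - m) ≤ C ((M - m) - (M' - m') + 2 r)`; dropping the nonnegative term
`M' - m'` on the left and dividing by `C` yields the claim.
-/

/-- Derivation of the oscillation-reduction inequality (osc2) from the two Harnack-type
inequalities, as in the proof of the Hölder regularity theorem: with `v = u − inf_B u`
and `w = sup_B u − u`, the Harnack inequalities on `B' ⊆ B` imply
`osc_{B'} u ≤ ((C−1)/C)·osc_B u + 2r`. -/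
theorem oscillation_reduction
    {X : Type*} (B B' : Set X) (hB'B : B' ⊆ B) (hB' : B'.Nonempty)
    (u : X → ℝ)
    (hbddAbove : BddAbove (u '' B)) (hbddBelow : BddBelow (u '' B))
    (r : ℝ) (hr : 0 < r) (C : ℝ) (hC : 1 ≤ C)
    (v w : X → ℝ)
    (hv : ∀ x ∈ B, v x = u x - sInf (u '' B))
    (hw : ∀ x ∈ B, w x = sSup (u '' B) - u x)
    (hHarnack_v : sSup (v '' B') ≤ C * (sInf (v '' B') + r))
    (hHarnack_w : sSup (w '' B') ≤ C * (sInf (w '' B') + r)) :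
    sSup (u '' B') - sInf (u '' B') ≤
      ((C - 1) / C) * (sSup (u '' B) - sInf (u '' B)) + 2 * r := by
  have hC0 : 0 < C := by linarith
  have hne : (u '' B').Nonempty := hB'.image u
  have habove : BddAbove (u '' B') := hbddAbove.mono (Set.image_mono hB'B)
  have hbelow : BddBelow (u '' B') := hbddBelow.mono (Set.image_mono hB'B)
  have hLub := isLUB_csSup hne habove
  have hGlb := isGLB_csInf hne hbelow
  have hosc : sInf (u '' B') ≤ sSup (u '' B') := csInf_le_csSup hne hbelow habove
  have hvB : v '' B' = (fun t => t - sInf (u '' B)) '' (u '' B') := by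
    rw [Set.image_image]
    exact Set.image_congr fun x hx => hv x (hB'B hx)
  have hwB : w '' B' = (fun t => sSup (u '' B) - t) '' (u '' B') := by
    rw [Set.image_image]
    exact Set.image_congr fun x hx => hw x (hB'B hx)
  rw [hvB] at hHarnack_v
  rw [hwB] at hHarnack_w
  generalize sSup (u '' B) = M at *
  generalize sInf (u '' B) = m at *
  generalize sSup (u '' B') = M' at *
  generalize sInf (u '' B') = m' at *
  have h1 : sSup ((fun t => t - m) '' (u '' B')) = M' - m :=
    ((OrderIso.subRight m).isLUB_image'.2 hLub).csSup_eq (hne.image _)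
  have h2 : sInf ((fun t => t - m) '' (u '' B')) = m' - m :=
    ((OrderIso.subRight m).isGLB_image'.2 hGlb).csInf_eq (hne.image _)
  have h3 : sSup ((fun t => M - t) '' (u '' B')) = M - m' := by
    refine IsLUB.csSup_eq ⟨?_, fun b hb => ?_⟩ (hne.image _)
    · rintro _ ⟨t, ht, rfl⟩
      exact sub_le_sub_left (hGlb.1 ht) M
    · have : M - b ≤ m' := hGlb.2 fun t ht => by
        have := hb ⟨t, ht, rfl⟩
        dsimp only at this
        linarith
      linarith
  have h4 : sInf ((fun t => M - t) '' (u '' B')) = M - M' := by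
    refine IsGLB.csInf_eq ⟨?_, fun b hb => ?_⟩ (hne.image _)
    · rintro _ ⟨t, ht, rfl⟩
      exact sub_le_sub_left (hLub.1 ht) M
    · have : M' ≤ M - b := hLub.2 fun t ht => by
        have := hb ⟨t, ht, rfl⟩
        dsimp only at this
        linarith
      linarith
  rw [h1, h2] at hHarnack_v
  rw [h3, h4] at hHarnack_w
  have key : M' - m' ≤ ((C - 1) * (M - m) + 2 * r * C) / C := by
    rw [le_div_iff₀ hC0]
    nlinarith
  calc M' - m' ≤ _ := key
    _ = _ := by field_simp
end
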